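/- Let α be a natural number and let q : Fin α → ℕ → ℝ be a family of functions such that for every k, the values q k t lie in the interval [0,1] for all t ≥ 1, and each function q k is antitone (nonincreasing) in t. For an allocation φ : Fin α → ℕ define S(φ) = Σ_{k} Σ_{t=1}^{φ k} q k t. Suppose φ : Fin α → ℕ satisfies Σ_k φ k = T and S(φ) = max { S(ψ) : Σ_k ψ k = T }, and let j be an index maximizing q k (φ k + 1) over all k. Then for every allocation ψ : Fin α → ℕ with Σ_k ψ k = T and every index i, one has S(ψ) + q i (ψ i + 1) ≤ S(φ) + q j (φ j + 1). -/

import Mathlib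

/-!
Let `χ` be `ψ` with one more pick from ranking `i`. Since `χ` has total `T + 1` and `φ` has
total `T`, some ranking `k` satisfies `φ k + 1 ≤ χ k`. Removing the last pick of `k` from `χ`
leaves an allocation of total `T`, worth at most `S φ`; the removed pick is worth
`q k (χ k) ≤ q k (φ k + 1) ≤ q j (φ j + 1)` by monotonicity and the greedy choice of `j`.
-/

/-- One additional pick from ranking `i` raises the value of an allocation by its next score. -/
lemma sum_prefix_add_single {α : ℕ} (q : Fin α → ℕ → ℝ) (ψ : Fin α → ℕ) (i : Fin α) :
    ∑ k, ∑ t ∈ Finset.Icc 1 ((ψ + Pi.single i 1 : Fin α → ℕ) k), q k t =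
      (∑ k, ∑ t ∈ Finset.Icc 1 (ψ k), q k t) + q i (ψ i + 1) := by
  have h : ∀ k, ∑ t ∈ Finset.Icc 1 ((ψ + Pi.single i 1 : Fin α → ℕ) k), q k t =
      (∑ t ∈ Finset.Icc 1 (ψ k), q k t) + if k = i then q i (ψ i + 1) else 0 := by
    intro k
    by_cases hk : k = i
    · subst hk
      simp [Finset.sum_Icc_succ_top]
    · simp [hk]
  rw [Finset.sum_congr rfl fun k _ => h k, Finset.sum_add_distrib]
  simp

/-- Exchange inequality at the heart of the greedy-optimality lemma for
RankMerging: if `φ` is an optimal allocation of total `T` for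
`S ψ = ∑ k, ∑ t in [1, ψ k], q k t`, where each `q k` takes values in `[0,1]`
on positive integers and is nonincreasing, and `j` maximizes `q k (φ k + 1)`,
then no allocation `ψ` of total `T` followed by one additional pick from any
ranking `i` can exceed `S φ + q j (φ j + 1)`. -/
theorem rankmerging_exchange_inequality
    (α : ℕ) (q : Fin α → ℕ → ℝ)
    (hq01 : ∀ k : Fin α, ∀ t : ℕ, 1 ≤ t → q k t ∈ Set.Icc (0 : ℝ) 1)
    (hmono : ∀ k : Fin α, Antitone (q k))
    (S : (Fin α → ℕ) → ℝ)
    (hS : ∀ φ : Fin α → ℕ, S φ = ∑ k : Fin α, ∑ t ∈ Finset.Icc 1 (φ k), q k t)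
    (T : ℕ) (φ : Fin α → ℕ)
    (hφsum : (∑ k : Fin α, φ k) = T)
    (hφopt : IsGreatest {x : ℝ | ∃ ψ : Fin α → ℕ, (∑ k : Fin α, ψ k) = T ∧ S ψ = x}
      (S φ))
    (j : Fin α)
    (hj : ∀ k : Fin α, q k (φ k + 1) ≤ q j (φ j + 1)) :
    ∀ ψ : Fin α → ℕ, (∑ k : Fin α, ψ k) = T →
      ∀ i : Fin α, S ψ + q i (ψ i + 1) ≤ S φ + q j (φ j + 1) := by
  intro ψ hψ i
  obtain ⟨χ, hχ⟩ : ∃ χ : Fin α → ℕ, χ = ψ + Pi.single i 1 := ⟨_, rfl⟩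
  have hχsum : ∑ k, χ k = T + 1 := by
    simp [hχ, Finset.sum_add_distrib, hψ]
  obtain ⟨k, -, hk⟩ : ∃ k ∈ Finset.univ, φ k < χ k :=
    Finset.exists_lt_of_sum_lt (by omega)
  obtain ⟨ω, hω⟩ : ∃ ω : Fin α → ℕ, χ = ω + Pi.single k 1 := by
    refine ⟨χ - Pi.single k 1, ?_⟩
    funext l
    by_cases hl : l = k
    · subst hl
      simp
      omega
    · simp [hl]
  have hωsum : ∑ l, ω l = T := by
    simpa [hω, Finset.sum_add_distrib] using hχsum
  have hχψ : S χ = S ψ + q i (ψ i + 1) := by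
    rw [hS, hS, hχ, sum_prefix_add_single]
  have hχω : S χ = S ω + q k (ω k + 1) := by
    rw [hS, hS, hω, sum_prefix_add_single]
  have hopt : S ω ≤ S φ := hφopt.2 ⟨ω, hωsum, rfl⟩
  have hle : φ k + 1 ≤ ω k + 1 := by
    simpa [hω] using hk
  linarith [hmono k hle, hj k]
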